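/- Let p(k) denote the number of partitions of k. The number of terms in the Lagrange inversion coefficient A_n (indexed by partitions s₁ + 2s₂ + 3s₃ + ⋯ = n − 1) equals p(n − 1), and log p(k) ~ π√(2k/3) as k → ∞; in particular, for every C > 0 there exists K such that p(k) ≥ exp(C√k) for all k ≥ K is false for C > π√(2/3) and true for C < π√(2/3). -/

import Mathlib

open Filter Real

/-!
The finite counting claim is the bijection sending a finitely supported `s` to the multiset
containing `i + 1` with multiplicity `s i` (`multiplicityEquivPartition`).

For the asymptotics, write `p(k)` for the number of partitions of `k`, `F(t) = ∑ p(k) e^{-kt}`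
and `A = π² / 6`. Comparing `F` with the products `∏_{j ≤ N} (1 - e^{-jt})⁻¹`, whose logarithms
are `∑_m (1/m) ∑_{j ≤ N} e^{-jmt}`, and summing the geometric series in `j` shows that, morally,
`log F(t) = ∑_m 1 / (m (e^{mt} - 1))`. Since `e^{mt} - 1 ≥ mt`, this is at most `ζ(2)/t = A/t`
(`partitionSeries_le`); since `t / (e^{mt} - 1) → 1/m`, it is at least `(A - ε)/t` for small `t`
(`eventually_le_partitionSeries`).

The upper bound `log p(k) ≤ 2 √A √k = π √(2k/3)` follows from `p(k) e^{-kt} ≤ F(t)` at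
`t = √(A/k)` (`log_card_le`). For the lower bound, exponential tilting (`partitionSeries_split`)
shows that the terms of `F(t)` with `k` outside `[(1 - δ)² A/t², (1 + δ)² A/t²]` contribute at most
`2 e^{(1 - δ²/2) A/t}`, which is negligible against `F(t)`. Hence the remaining terms carry at
least half of `F(t)`; as `p` is monotone they are all bounded by `p(n) e^{-(1 - δ)² A/t}` with
`n = (1 + δ)² A/t²`, and this forces `log p(n) ≥ (2 - 2δ) A/t - log (2(n + 1))`
(`card_partition_lower`). Letting `n → ∞` and then `δ → 0` gives the matching constant `2 √A`.
-/

/-! ### Partitions as multiplicity sequences -/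

/-- A multiplicity sequence `s` with `∑ (i + 1) s_i = k` is a partition of `k`: the part `i + 1`
is taken `s_i` times. -/
noncomputable def multiplicityEquivPartition (k : ℕ) :
    {s : ℕ →₀ ℕ // (s.sum fun i m => (i + 1) * m) = k} ≃ Nat.Partition k where
  toFun s :=
    { parts := (Finsupp.toMultiset s.1).map (· + 1)
      parts_pos := by
        intro i hi
        obtain ⟨j, -, rfl⟩ := Multiset.mem_map.1 hi
        exact Nat.succ_pos j
      parts_sum := by
        rw [Finsupp.toMultiset_map, Finsupp.sum_toMultiset,
          Finsupp.sum_mapDomain_index (by simp) (by intros; simp [add_mul])]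
        refine Eq.trans (Finsupp.sum_congr fun i _ => ?_) s.2
        simp [mul_comm] }
  invFun q := ⟨Multiset.toFinsupp (q.parts.map (· - 1)), by
    have h : ∀ t : ℕ →₀ ℕ, (t.sum fun i m => (i + 1) * m) =
        ((Finsupp.toMultiset t).map (· + 1)).sum := by
      intro t
      rw [Finsupp.toMultiset_map, Finsupp.sum_toMultiset,
          Finsupp.sum_mapDomain_index (by simp) (by intros; simp [add_mul])]
      exact Finsupp.sum_congr fun i _ => by simp [mul_comm]
    rw [h, Multiset.toFinsupp_toMultiset, Multiset.map_map]
    conv_rhs => rw [← q.parts_sum]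
    congr 1
    conv_rhs => rw [← Multiset.map_id q.parts]
    refine Multiset.map_congr rfl fun i hi => ?_
    have := q.parts_pos hi
    simp only [Function.comp_apply, id]
    omega⟩
  left_inv s := by
    apply Subtype.ext
    simp [Multiset.map_map]
  right_inv q := by
    apply Nat.Partition.ext
    simp only [Multiset.toFinsupp_toMultiset, Multiset.map_map]
    conv_rhs => rw [← Multiset.map_id q.parts]
    refine Multiset.map_congr rfl fun i hi => ?_
    have := q.parts_pos hi
    simp only [Function.comp_apply, id]
    omega

theorem card_multiplicity (k : ℕ) :
    Nat.card {s : ℕ →₀ ℕ // (s.sum fun i m => (i + 1) * m) = k}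
      = Fintype.card (Nat.Partition k) := by
  rw [Nat.card_congr (multiplicityEquivPartition k), Nat.card_eq_fintype_card]

instance finite_multiplicity (k : ℕ) :
    Finite {s : ℕ →₀ ℕ // (s.sum fun i m => (i + 1) * m) = k} :=
  Finite.of_equiv _ (multiplicityEquivPartition k).symm

theorem card_partition_mono : Monotone fun k => Fintype.card (Nat.Partition k) := by
  refine monotone_nat_of_le_succ fun k => ?_
  -- adjoin a part equal to `1`
  refine Fintype.card_le_of_injective
    (fun q : Nat.Partition k => (⟨1 ::ₘ q.parts, ?_, ?_⟩ : Nat.Partition (k + 1))) ?_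
  · intro i hi
    rcases Multiset.mem_cons.1 hi with rfl | h
    · exact one_pos
    · exact q.parts_pos h
  · simp [q.parts_sum, add_comm]
  · intro q r h
    apply Nat.Partition.ext
    simpa using congrArg Nat.Partition.parts h

theorem card_partition_pos (k : ℕ) : 0 < Fintype.card (Nat.Partition k) :=
  Fintype.card_pos

/-! ### Partitions into bounded parts -/

/-- The size of the partition with `s i` parts equal to `i + 1` for `i < N`. -/
def weight (N : ℕ) (s : Fin N → ℕ) : ℕ := ∑ i : Fin N, ((i : ℕ) + 1) * s i

/-- The number of partitions of `k` into parts of size at most `N`. -/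
noncomputable def boundedCount (N k : ℕ) : ℕ := Nat.card {s : Fin N → ℕ // weight N s = k}

/-- Extension by zero of a multiplicity vector. -/
noncomputable def extendZero (N k : ℕ) (s : {s : Fin N → ℕ // weight N s = k}) :
    {s : ℕ →₀ ℕ // (s.sum fun i m => (i + 1) * m) = k} :=
  ⟨(Finsupp.equivFunOnFinite.symm s.1).embDomain Fin.valEmbedding, by
    rw [Finsupp.sum_embDomain, Finsupp.sum_fintype _ _ (by simp)]
    simpa [weight] using s.2⟩

theorem extendZero_injective (N k : ℕ) : Function.Injective (extendZero N k) := by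
  intro s t h
  have h := congrArg Subtype.val h
  simp only [extendZero] at h
  have := Finsupp.embDomain_injective _ h
  exact Subtype.ext (Finsupp.equivFunOnFinite.symm.injective this)

instance finite_weight (N k : ℕ) : Finite {s : Fin N → ℕ // weight N s = k} :=
  Finite.of_injective _ (extendZero_injective N k)

theorem boundedCount_le (N k : ℕ) : boundedCount N k ≤ Fintype.card (Nat.Partition k) := by
  rw [← card_multiplicity]
  exact Nat.card_le_card_of_injective _ (extendZero_injective N k)

theorem le_boundedCount {N k : ℕ} (h : k ≤ N) :
    Fintype.card (Nat.Partition k) ≤ boundedCount N k := by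
  rw [← card_multiplicity]
  -- no part of a partition of `k` exceeds `k`, so restriction to the first `N` parts loses nothing
  have hz : ∀ s : {s : ℕ →₀ ℕ // (s.sum fun i m => (i + 1) * m) = k}, ∀ i, N ≤ i → s.1 i = 0 := by
    rintro ⟨s, hs⟩ i hi
    by_contra hne
    have h1 : (i + 1) * s i ≤ k := by
      rw [← hs]
      exact Finset.single_le_sum (f := fun i => (i + 1) * s i) (fun _ _ => Nat.zero_le _)
        (Finsupp.mem_support_iff.2 hne)
    have : 1 ≤ s i := Nat.one_le_iff_ne_zero.2 hne
    nlinarith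
  refine Nat.card_le_card_of_injective (fun s => ⟨fun i => s.1 i, ?_⟩) ?_
  · rw [weight, ← Finset.sum_range (fun i => (i + 1) * s.1 i)]
    conv_rhs => rw [← s.2]
    rw [Finsupp.sum_of_support_subset _ _ _ (by simp)]
    intro i hi
    rw [Finset.mem_range]
    by_contra hcon
    exact Finsupp.mem_support_iff.1 hi (hz s i (not_lt.1 hcon))
  · intro s t hst
    apply Subtype.ext
    ext i
    by_cases hi : i < N
    · exact congrFun (congrArg Subtype.val hst) ⟨i, hi⟩
    · rw [hz s i (not_lt.1 hi), hz t i (not_lt.1 hi)]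

/-! ### Euler products and their logarithms -/

/-- Expanding the product of the geometric series of the `x ^ (i + 1)` gives one monomial for each
multiplicity vector. -/
theorem hasSum_weight {x : ℝ} (h0 : 0 ≤ x) (h1 : x < 1) (N : ℕ) :
    HasSum (fun s : Fin N → ℕ => x ^ weight N s)
      (∏ i ∈ Finset.range N, (1 - x ^ (i + 1))⁻¹) := by
  induction N with
  | zero => simp [weight]
  | succ N ih =>
    rw [← (Fin.snocEquiv fun _ => ℕ).hasSum_iff, Finset.prod_range_succ, mul_comm]
    have hg : HasSum (fun m : ℕ => (x ^ (N + 1)) ^ m) (1 - x ^ (N + 1))⁻¹ :=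
      hasSum_geometric_of_lt_one (by positivity) (pow_lt_one₀ h0 h1 (by omega))
    have a1 : (0 : ℕ → ℝ) ≤ fun m => (x ^ (N + 1)) ^ m := fun m => pow_nonneg (pow_nonneg h0 _) m
    have a2 : (0 : (Fin N → ℕ) → ℝ) ≤ fun s => x ^ weight N s := fun s => pow_nonneg h0 _
    have hsum : Summable fun p : ℕ × (Fin N → ℕ) => (x ^ (N + 1)) ^ p.1 * x ^ weight N p.2 :=
      Summable.mul_of_nonneg (f := fun m => (x ^ (N + 1)) ^ m) (g := fun s => x ^ weight N s)
        hg.summable ih.summable a1 a2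
    have e : (fun s : Fin (N + 1) → ℕ => x ^ weight (N + 1) s) ∘ (Fin.snocEquiv fun _ => ℕ) =
        fun p : ℕ × (Fin N → ℕ) => (x ^ (N + 1)) ^ p.1 * x ^ weight N p.2 := by
      funext p
      have hw : weight (N + 1) (Fin.snocEquiv (fun _ => ℕ) p) = (N + 1) * p.1 + weight N p.2 := by
        simp [weight, Fin.sum_univ_castSucc, add_comm]
      rw [Function.comp_apply, hw, pow_add, pow_mul]
    rw [e]
    exact HasSum.mul (f := fun m => (x ^ (N + 1)) ^ m) (g := fun s => x ^ weight N s) hg ih hsum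

/-- The terms of `hasSum_weight` are grouped by the size of the partition. -/
theorem hasSum_boundedCount {x : ℝ} (h0 : 0 ≤ x) (h1 : x < 1) (N : ℕ) :
    HasSum (fun k => (boundedCount N k : ℝ) * x ^ k)
      (∏ i ∈ Finset.range N, (1 - x ^ (i + 1))⁻¹) := by
  have h := hasSum_weight h0 h1 N
  rw [← (Equiv.sigmaFiberEquiv (weight N)).hasSum_iff] at h
  refine h.sigma fun k => ?_
  have : Fintype {s : Fin N → ℕ // weight N s = k} := Fintype.ofFinite _
  convert hasSum_fintype (fun _ : {s : Fin N → ℕ // weight N s = k} => x ^ k) using 1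
  · funext s
    simp [Equiv.sigmaFiberEquiv, s.2]
  · simp [boundedCount]

/-- Euler's product at `x = exp (-t)`: the generating function of partitions into parts at most
`N`. -/
noncomputable def eulerProd (N : ℕ) (t : ℝ) : ℝ :=
  ∏ i ∈ Finset.range N, (1 - exp (-t) ^ (i + 1))⁻¹

theorem eulerProd_pos (N : ℕ) {t : ℝ} (ht : 0 < t) : 0 < eulerProd N t := by
  refine Finset.prod_pos fun i _ => inv_pos.2 (sub_pos.2 ?_)
  exact pow_lt_one₀ (exp_pos _).le (by simpa using ht) (by omega)

theorem hasSum_log_eulerProd (N : ℕ) {t : ℝ} (ht : 0 < t) :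
    HasSum (fun m : ℕ => (∑ i ∈ Finset.range N, (exp (-t) ^ (m + 1)) ^ (i + 1)) / (m + 1 : ℝ))
      (log (eulerProd N t)) := by
  have hx : exp (-t) < 1 := by simpa using ht
  have hlt : ∀ i : ℕ, exp (-t) ^ (i + 1) < 1 := fun i =>
    pow_lt_one₀ (exp_pos _).le hx (by omega)
  rw [eulerProd, Real.log_prod (fun i _ => (inv_pos.2 (sub_pos.2 (hlt i))).ne')]
  simp_rw [Finset.sum_div]
  refine hasSum_sum fun i _ => ?_
  rw [log_inv]
  convert hasSum_pow_div_log_of_abs_lt_one (x := exp (-t) ^ (i + 1))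
    (by rw [abs_of_pos (by positivity)]; exact hlt i) using 3 with m
  rw [← pow_mul, ← pow_mul, mul_comm]

theorem hasSum_geom_succ {u : ℝ} (hu : 0 < u) :
    HasSum (fun i : ℕ => exp (-u) ^ (i + 1)) (1 / (exp u - 1)) := by
  have h := (hasSum_geometric_of_lt_one (exp_pos (-u)).le (by simpa using hu)).mul_left (exp (-u))
  have h1 : 1 < exp u := by simpa using hu
  have h2 : exp u - 1 ≠ 0 := by linarith
  have e : exp (-u) * (1 - exp (-u))⁻¹ = 1 / (exp u - 1) := by
    rw [exp_neg]; field_simp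
  rw [e] at h
  simpa only [pow_succ'] using h

theorem exp_neg_pow (t : ℝ) (m : ℕ) : exp (-t) ^ (m + 1) = exp (-((m + 1 : ℝ) * t)) := by
  rw [← exp_nat_mul]; congr 1; push_cast; ring

theorem hasSum_zeta_two_succ : HasSum (fun m : ℕ => 1 / ((m : ℝ) + 1) ^ 2) (π ^ 2 / 6) := by
  have := (hasSum_nat_add_iff' 1).2 hasSum_zeta_two
  simpa using this

theorem log_eulerProd_le (N : ℕ) {t : ℝ} (ht : 0 < t) :
    log (eulerProd N t) ≤ π ^ 2 / 6 / t := by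
  refine hasSum_le (fun m => ?_) (hasSum_log_eulerProd N ht) (hasSum_zeta_two_succ.div_const t)
  have hu : 0 < (m + 1 : ℝ) * t := by positivity
  rw [exp_neg_pow]
  have h1 := sum_le_hasSum (Finset.range N) (fun i _ => by positivity) (hasSum_geom_succ hu)
  have h2 : 1 / (exp ((m + 1 : ℝ) * t) - 1) ≤ 1 / ((m + 1 : ℝ) * t) :=
    one_div_le_one_div_of_le hu (by linarith [add_one_le_exp ((m + 1 : ℝ) * t)])
  calc _ ≤ (1 / ((m + 1 : ℝ) * t)) / (m + 1 : ℝ) := by gcongr; exact h1.trans h2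
    _ = _ := by field_simp

theorem eulerProd_le (N : ℕ) {t : ℝ} (ht : 0 < t) :
    eulerProd N t ≤ exp (π ^ 2 / 6 / t) :=
  (log_le_iff_le_exp (eulerProd_pos N ht)).1 (log_eulerProd_le N ht)

/-- A uniform bound for the logarithms of the Euler products also bounds the partial sums of
`∑ 1 / (m (exp (m t) - 1))`; this is obtained by letting the bound on the parts go to
infinity and discarding all but `M` terms of the logarithmic series. -/
theorem le_of_eulerProd_le {t B : ℝ} (ht : 0 < t) (hB : ∀ N, log (eulerProd N t) ≤ B) (M : ℕ) :
    ∑ m ∈ Finset.range M, 1 / (exp ((m + 1 : ℝ) * t) - 1) / (m + 1 : ℝ) ≤ B := by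
  have hlim : Tendsto (fun N => ∑ m ∈ Finset.range M,
      (∑ i ∈ Finset.range N, (exp (-t) ^ (m + 1)) ^ (i + 1)) / (m + 1 : ℝ)) atTop
      (nhds (∑ m ∈ Finset.range M, 1 / (exp ((m + 1 : ℝ) * t) - 1) / (m + 1 : ℝ))) := by
    refine tendsto_finsetSum _ fun m _ => Tendsto.div_const ?_ _
    rw [exp_neg_pow]
    exact (hasSum_geom_succ (by positivity)).tendsto_sum_nat
  refine le_of_tendsto' hlim fun N => le_trans ?_ (hB N)
  exact sum_le_hasSum _ (fun m _ => by positivity) (hasSum_log_eulerProd N ht)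

theorem tendsto_mul_inv_exp_sub_one (m : ℕ) :
    Tendsto (fun t : ℝ => t * (1 / (exp ((m + 1 : ℝ) * t) - 1) / (m + 1 : ℝ))) (nhdsWithin 0 (Set.Ioi 0))
      (nhds (1 / ((m : ℝ) + 1) ^ 2)) := by
  have hd : HasDerivAt (fun t : ℝ => exp ((m + 1 : ℝ) * t)) (m + 1 : ℝ) 0 := by
    have := ((hasDerivAt_id (0 : ℝ)).const_mul (m + 1 : ℝ)).exp
    simpa using this
  have h1 := hd.tendsto_slope_zero_right
  have h2 := (h1.inv₀ (by positivity : (m + 1 : ℝ) ≠ 0)).div_const (m + 1 : ℝ)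
  convert h2 using 2 with t
  · simp [div_eq_mul_inv]; ring
  · field_simp

/-! ### The partition generating function near `t = 0` -/

/-- The partition generating function at `exp (-t)`. -/
noncomputable def partitionSeries (t : ℝ) : ℝ :=
  ∑' k : ℕ, (Fintype.card (Nat.Partition k) : ℝ) * exp (-t) ^ k

theorem sum_card_le {t : ℝ} (ht : 0 < t) (N : ℕ) :
    ∑ k ∈ Finset.range N, (Fintype.card (Nat.Partition k) : ℝ) * exp (-t) ^ k
      ≤ exp (π ^ 2 / 6 / t) := by
  have hs := hasSum_boundedCount (exp_pos (-t)).le (by simpa using ht) N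
  refine le_trans ?_ (eulerProd_le N ht)
  refine le_trans (Finset.sum_le_sum fun k hk => ?_)
    (sum_le_hasSum (Finset.range N) (fun _ _ => by positivity) hs)
  gcongr
  exact le_boundedCount (Finset.mem_range.1 hk).le

theorem summable_partitionSeries {t : ℝ} (ht : 0 < t) :
    Summable fun k : ℕ => (Fintype.card (Nat.Partition k) : ℝ) * exp (-t) ^ k :=
  summable_of_sum_range_le (fun _ => by positivity) (sum_card_le ht)

theorem partitionSeries_le {t : ℝ} (ht : 0 < t) : partitionSeries t ≤ exp (π ^ 2 / 6 / t) :=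
  Real.tsum_le_of_sum_range_le (fun _ => by positivity) (sum_card_le ht)

theorem eulerProd_le_partitionSeries {t : ℝ} (ht : 0 < t) (N : ℕ) :
    eulerProd N t ≤ partitionSeries t := by
  refine hasSum_le (fun k => ?_)
    (hasSum_boundedCount (exp_pos (-t)).le (by simpa using ht) N)
    (summable_partitionSeries ht).hasSum
  gcongr
  exact boundedCount_le N k

/-- Lower half of `log F(t) ~ π² / (6 t)` as `t → 0⁺`. -/
theorem eventually_le_partitionSeries {a : ℝ} (ha : a < π ^ 2 / 6) :
    ∀ᶠ t in nhdsWithin (0 : ℝ) (Set.Ioi 0), exp (a / t) ≤ partitionSeries t := by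
  obtain ⟨M, hM⟩ := (hasSum_zeta_two_succ.tendsto_sum_nat.eventually_const_lt ha).exists
  have hlim := tendsto_finsetSum (Finset.range M) fun m _ => tendsto_mul_inv_exp_sub_one m
  filter_upwards [hlim.eventually_const_lt hM, self_mem_nhdsWithin] with t h1 ht
  have ht : 0 < t := ht
  have hpos : 0 < partitionSeries t := (eulerProd_pos 0 ht).trans_le (eulerProd_le_partitionSeries ht 0)
  rw [← le_log_iff_exp_le hpos, div_le_iff₀ ht]
  have := le_of_eulerProd_le ht
    (fun N => log_le_log (eulerProd_pos N ht) (eulerProd_le_partitionSeries ht N)) M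
  rw [← Finset.mul_sum] at h1
  nlinarith

/-! ### Concentration of the generating function -/

/-- The exponential-tilting inequality: the terms of the generating function with `k < y` are
compared with `F(t + u)`, those with `k > n` with `F(t - u)`, and the remaining ones with
`p(n)`, using monotonicity. -/
theorem partitionSeries_split {t u y : ℝ} (hu : 0 < u) (hut : u < t) (n : ℕ) :
    partitionSeries t ≤ (n + 1) * Fintype.card (Nat.Partition n) * exp (-(y * t))
      + exp (y * u) * partitionSeries (t + u) + exp (-(n * u)) * partitionSeries (t - u) := by
  have ht : 0 < t := hu.trans hut
  have hm : HasSum (fun k : ℕ => if k ∈ Finset.range (n + 1) then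
      (Fintype.card (Nat.Partition n) : ℝ) * exp (-(y * t)) else 0)
      ((n + 1) * Fintype.card (Nat.Partition n) * exp (-(y * t))) := by
    have : HasSum (fun k : ℕ => if k ∈ Finset.range (n + 1) then
        (Fintype.card (Nat.Partition n) : ℝ) * exp (-(y * t)) else 0) _ :=
      hasSum_sum_of_ne_finset_zero (s := Finset.range (n + 1)) fun k hk => if_neg hk
    rw [Finset.sum_congr rfl fun k hk => if_pos hk] at this
    simpa [mul_assoc] using this
  have hl := (summable_partitionSeries (by linarith : 0 < t + u)).hasSum.mul_left (exp (y * u))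
  have hr := (summable_partitionSeries (by linarith : 0 < t - u)).hasSum.mul_left (exp (-(n * u)))
  refine hasSum_le (fun k => ?_) (summable_partitionSeries ht).hasSum ((hm.add hl).add hr)
  have hp : (0 : ℝ) ≤ Fintype.card (Nat.Partition k) := Nat.cast_nonneg _
  have e : ∀ v : ℝ, exp (-v) ^ k = exp (-(k * v)) := fun v => by
    rw [← exp_nat_mul]; congr 1; ring
  simp only [e]
  have c1 : 0 ≤ exp (y * u) * ((Fintype.card (Nat.Partition k) : ℝ) * exp (-(k * (t + u)))) := by
    positivity
  have c2 : 0 ≤ exp (-(n * u)) * ((Fintype.card (Nat.Partition k) : ℝ) * exp (-(k * (t - u)))) := by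
    positivity
  have c0 : 0 ≤ (if k ∈ Finset.range (n + 1) then
      (Fintype.card (Nat.Partition n) : ℝ) * exp (-(y * t)) else 0) := by
    split_ifs <;> positivity
  by_cases hkn : k ≤ n
  · by_cases hky : (k : ℝ) < y
    · have : (Fintype.card (Nat.Partition k) : ℝ) * exp (-(k * t)) ≤
          exp (y * u) * ((Fintype.card (Nat.Partition k) : ℝ) * exp (-(k * (t + u)))) := by
        rw [mul_left_comm, ← exp_add]
        gcongr
        nlinarith
      linarith
    · have : (Fintype.card (Nat.Partition k) : ℝ) * exp (-(k * t)) ≤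
          (Fintype.card (Nat.Partition n) : ℝ) * exp (-(y * t)) := by
        gcongr
        · exact_mod_cast card_partition_mono hkn
        · exact not_lt.1 hky
      rw [if_pos (Finset.mem_range.2 (by omega))] at c0 ⊢
      linarith
  · have hnk : (n : ℝ) ≤ k := by exact_mod_cast (not_le.1 hkn).le
    have : (Fintype.card (Nat.Partition k) : ℝ) * exp (-(k * t)) ≤
        exp (-(n * u)) * ((Fintype.card (Nat.Partition k) : ℝ) * exp (-(k * (t - u)))) := by
      rw [mul_left_comm, ← exp_add]
      gcongr
      nlinarith
    linarith

/-- Both outer ranges of `partitionSeries_split` are exponentially smaller than `F(t)`, when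
`y = (1 - δ)² E / t`, `n = (1 + δ)² E / t` and `u = δ t`, where `E = π² / (6 t)`. -/
theorem card_partition_lower {δ t : ℝ} (hδ : 0 < δ) (hδ' : δ ≤ 1 / 2) (ht : 0 < t) {n : ℕ}
    (hn : n * t ^ 2 = (1 + δ) ^ 2 * (π ^ 2 / 6))
    (hF : exp ((1 - δ ^ 2 / 4) * (π ^ 2 / 6) / t) ≤ partitionSeries t)
    (hE : log 4 ≤ δ ^ 2 / 4 * (π ^ 2 / 6 / t)) :
    (2 - 2 * δ) * (π ^ 2 / 6 / t) - log 2 ≤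
      log (n + 1) + log (Fintype.card (Nat.Partition n)) := by
  set A := π ^ 2 / 6 with hA
  have hApos : 0 < A := by positivity
  set E := A / t with hEdef
  have hEpos : 0 < E := by positivity
  have hnE : n * t = (1 + δ) ^ 2 * E := by
    rw [hEdef]; field_simp; linarith
  have hsplit := partitionSeries_split (t := t) (u := δ * t) (y := (1 - δ) ^ 2 * E / t)
    (by positivity) (by nlinarith) n
  have hyt : (1 - δ) ^ 2 * E / t * t = (1 - δ) ^ 2 * E := by field_simp
  have b1 : exp ((1 - δ) ^ 2 * E / t * (δ * t)) * partitionSeries (t + δ * t) ≤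
      exp ((1 - δ ^ 2 / 2) * E) := by
    refine (mul_le_mul_of_nonneg_left (partitionSeries_le (by positivity)) (exp_pos _).le).trans ?_
    rw [← exp_add, exp_le_exp]
    have e1 : (1 - δ) ^ 2 * E / t * (δ * t) = (1 - δ) ^ 2 * δ * E := by field_simp
    have e2 : A / (t + δ * t) = 1 / (1 + δ) * E := by rw [hEdef]; field_simp
    have e3 : 1 / (1 + δ) ≤ 1 - δ + δ ^ 2 := by
      rw [div_le_iff₀ (by positivity)]; nlinarith [pow_pos hδ 3]
    rw [← hA, e1, e2, ← add_mul]
    gcongr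
    nlinarith [pow_pos hδ 2, pow_pos hδ 3]
  have b2 : exp (-(n * (δ * t))) * partitionSeries (t - δ * t) ≤
      exp ((1 - δ ^ 2 / 2) * E) := by
    refine (mul_le_mul_of_nonneg_left (partitionSeries_le (by nlinarith)) (exp_pos _).le).trans ?_
    rw [← exp_add, exp_le_exp]
    have hd : 1 - δ ≠ 0 := by linarith
    have e1 : -(n * (δ * t)) = -((1 + δ) ^ 2 * δ) * E := by
      linear_combination (-δ) * hnE
    have e2 : A / (t - δ * t) = 1 / (1 - δ) * E := by
      rw [hEdef, show t - δ * t = (1 - δ) * t by ring]; field_simp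
    have e3 : 1 / (1 - δ) ≤ 1 + δ + δ ^ 2 + 2 * δ ^ 3 := by
      rw [div_le_iff₀ (by linarith)]
      nlinarith [mul_nonneg (pow_pos hδ 3).le (by linarith : 0 ≤ 1 - 2 * δ)]
    rw [← hA, e1, e2, ← add_mul]
    gcongr
    nlinarith [pow_pos hδ 2, pow_pos hδ 3]
  have b3 : 4 * exp ((1 - δ ^ 2 / 2) * E) ≤ exp ((1 - δ ^ 2 / 4) * E) := by
    rw [show (1 - δ ^ 2 / 4) * E = δ ^ 2 / 4 * E + (1 - δ ^ 2 / 2) * E by ring, exp_add]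
    gcongr
    exact (log_le_iff_le_exp (by norm_num)).1 hE
  rw [show (1 - δ ^ 2 / 4) * A / t = (1 - δ ^ 2 / 4) * E by rw [hEdef]; ring] at hF
  rw [hyt] at hsplit
  have hp : (0 : ℝ) < Fintype.card (Nat.Partition n) := by exact_mod_cast card_partition_pos n
  have key : exp ((1 - δ ^ 2 / 4) * E) / 2 ≤
      (n + 1) * Fintype.card (Nat.Partition n) * exp (-((1 - δ) ^ 2 * E)) := by linarith
  have h2 := log_le_log (by positivity) key
  rw [log_div (exp_pos _).ne' two_ne_zero, log_mul (by positivity) (exp_pos _).ne',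
    log_mul (by positivity) hp.ne', log_exp, log_exp] at h2
  have : (2 - 2 * δ) * E ≤ (1 - δ ^ 2 / 4) * E + (1 - δ) ^ 2 * E := by
    rw [← add_mul]; gcongr; nlinarith [pow_pos hδ 2]
  linarith

/-! ### The growth of `log p(k)` -/

theorem sqrt_zeta_two : π * √(2 / 3) = 2 * √(π ^ 2 / 6) := by
  rw [show π ^ 2 / 6 = (π / 2) ^ 2 * (2 / 3) by ring, sqrt_mul (by positivity),
    sqrt_sq (by positivity)]
  ring

/-- A single term of the generating function is at most its sum; the saddle point
`t = √(π² / (6 k))` optimises the resulting bound. -/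
theorem log_card_le {k : ℕ} (hk : 0 < k) :
    log (Fintype.card (Nat.Partition k)) ≤ 2 * √(π ^ 2 / 6) * √k := by
  set B := √(π ^ 2 / 6) with hB
  have hBpos : 0 < B := sqrt_pos.2 (by positivity)
  have hB2 : B ^ 2 = π ^ 2 / 6 := sq_sqrt (by positivity)
  have hs : 0 < √(k : ℝ) := sqrt_pos.2 (by exact_mod_cast hk)
  have hs2 : √(k : ℝ) ^ 2 = k := sq_sqrt (Nat.cast_nonneg _)
  have ht : 0 < B / √k := by positivity
  have h : (Fintype.card (Nat.Partition k) : ℝ) * exp (-(B / √k)) ^ k ≤ _ :=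
    ((summable_partitionSeries ht).le_tsum k fun _ _ => by positivity).trans
      (partitionSeries_le ht)
  have hp : (0 : ℝ) < Fintype.card (Nat.Partition k) := by exact_mod_cast card_partition_pos k
  have h2 := log_le_log (by positivity) h
  rw [log_mul hp.ne' (by positivity), log_pow, log_exp, log_exp, ← hB2] at h2
  have e1 : (k : ℝ) * -(B / √k) = -(B * √k) := by
    nth_rewrite 1 [← hs2]; field_simp
  have e2 : B ^ 2 / (B / √k) = B * √k := by field_simp
  rw [e1, e2] at h2
  linarith

theorem tendsto_log_div_sqrt :
    Tendsto (fun n : ℕ => (log 2 + log ((n : ℝ) + 1)) / √n) atTop (nhds 0) := by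
  have h : Tendsto (fun x : ℝ => (2 * log 2 + log x) / x ^ (1 / 2 : ℝ)) atTop (nhds 0) := by
    have h1 := (isLittleO_log_rpow_atTop (r := 1 / 2) (by norm_num)).tendsto_div_nhds_zero
    have h2 : Tendsto (fun x : ℝ => 2 * log 2 / x ^ (1 / 2 : ℝ)) atTop (nhds 0) :=
      (tendsto_rpow_atTop (by norm_num)).const_div_atTop _
    simpa [add_div] using h2.add h1
  refine squeeze_zero' (Eventually.of_forall fun n => ?_) ?_
    (h.comp tendsto_natCast_atTop_atTop)
  · have : 0 ≤ log ((n : ℝ) + 1) := log_nonneg (by linarith [(Nat.cast_nonneg n : (0 : ℝ) ≤ n)])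
    have : 0 ≤ log (2 : ℝ) := log_nonneg (by norm_num)
    positivity
  · filter_upwards [eventually_ge_atTop 1] with n hn
    have hn : (1 : ℝ) ≤ n := by exact_mod_cast hn
    simp only [Function.comp_apply, ← sqrt_eq_rpow]
    have : log ((n : ℝ) + 1) ≤ log 2 + log n := by
      rw [← log_mul (by norm_num) (by positivity)]
      exact log_le_log (by positivity) (by linarith)
    have : log 2 + log ((n : ℝ) + 1) ≤ 2 * log 2 + log n := by linarith
    gcongr

/-- The lower bound of `card_partition_lower` at `t = (1 + δ) √(π² / (6 n))`, the value for which
`n = (1 + δ)² π² / (6 t²)`. -/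
theorem eventually_lower {δ : ℝ} (hδ : 0 < δ) (hδ' : δ ≤ 1 / 2) :
    ∀ᶠ n : ℕ in atTop, (2 - 4 * δ) * √(π ^ 2 / 6) - (log 2 + log ((n : ℝ) + 1)) / √n ≤
      log (Fintype.card (Nat.Partition n)) / √n := by
  set B := √(π ^ 2 / 6) with hB
  have hBpos : 0 < B := sqrt_pos.2 (by positivity)
  have hB2 : B ^ 2 = π ^ 2 / 6 := sq_sqrt (by positivity)
  have hsq : Tendsto (fun n : ℕ => √(n : ℝ)) atTop atTop :=
    tendsto_sqrt_atTop.comp tendsto_natCast_atTop_atTop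
  have ht0 : Tendsto (fun n : ℕ => (1 + δ) * B / √n) atTop (nhdsWithin 0 (Set.Ioi 0)) := by
    refine tendsto_nhdsWithin_iff.2 ⟨hsq.const_div_atTop _, ?_⟩
    filter_upwards [eventually_gt_atTop 0] with n hn
    have : 0 < √(n : ℝ) := sqrt_pos.2 (by exact_mod_cast hn)
    exact Set.mem_Ioi.2 (by positivity)
  have hF := ht0.eventually (eventually_le_partitionSeries
    (a := (1 - δ ^ 2 / 4) * (π ^ 2 / 6)) (by nlinarith [pow_pos hδ 2, pow_pos pi_pos 2]))
  have hE := (hsq.const_mul_atTop (by positivity : 0 < δ ^ 2 / 4 * (B / (1 + δ)))).eventually_ge_atTop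
    (log 4)
  filter_upwards [hF, hE, eventually_gt_atTop 0] with n h1 h2 hn
  have hs : 0 < √(n : ℝ) := sqrt_pos.2 (by exact_mod_cast hn)
  have hs2 : √(n : ℝ) ^ 2 = n := sq_sqrt (Nat.cast_nonneg _)
  have e : π ^ 2 / 6 / ((1 + δ) * B / √n) = B / (1 + δ) * √n := by
    rw [← hB2]; field_simp
  have h := card_partition_lower hδ hδ' (by positivity) (n := n) (t := (1 + δ) * B / √n)
    (by rw [div_pow, mul_pow, hB2, hs2]; field_simp) h1 (by rw [e]; linarith)
  rw [e] at h
  rw [sub_le_iff_le_add, ← add_div, le_div_iff₀ hs]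
  have h3 : (2 - 4 * δ) * B * √n ≤ (2 - 2 * δ) * (B / (1 + δ) * √n) := by
    have : 2 - 4 * δ ≤ (2 - 2 * δ) / (1 + δ) := by
      rw [le_div_iff₀ (by positivity)]; nlinarith
    calc (2 - 4 * δ) * B * √n ≤ (2 - 2 * δ) / (1 + δ) * B * √n := by gcongr
      _ = _ := by ring
  linarith

/-- The Lagrange inversion coefficient `A_n` is a sum over partitions
`s₁ + 2s₂ + 3s₃ + ⋯ = n − 1`, hence has `p(n−1)` terms, and the partition
function satisfies the Hardy–Ramanujan asymptotic `log p(k) ~ π√(2k/3)`. -/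
theorem partition_terms_and_asymptotics :
    (∀ n : ℕ, 1 ≤ n →
      Nat.card {s : ℕ →₀ ℕ // (s.sum fun i m => (i + 1) * m) = n - 1}
        = Fintype.card (Nat.Partition (n - 1))) ∧
    Tendsto
      (fun k : ℕ => Real.log (Fintype.card (Nat.Partition k)) / Real.sqrt k)
      atTop (nhds (π * Real.sqrt (2 / 3))) := by
  refine ⟨fun n _ => card_multiplicity (n - 1), ?_⟩
  rw [sqrt_zeta_two]
  have hBpos : 0 < √(π ^ 2 / 6) := sqrt_pos.2 (by positivity)
  refine tendsto_order.2 ⟨fun a ha => ?_, fun b hb => ?_⟩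
  · -- choose `δ` with `a < (2 - 4 δ) √(π² / 6)`
    obtain ⟨δ, hδ, hδ', hδa⟩ : ∃ δ : ℝ, 0 < δ ∧ δ ≤ 1 / 2 ∧ a < (2 - 4 * δ) * √(π ^ 2 / 6) := by
      refine ⟨min (1 / 2) ((2 * √(π ^ 2 / 6) - a) / (8 * √(π ^ 2 / 6))),
        lt_min (by norm_num) (div_pos (by linarith) (by positivity)), min_le_left _ _, ?_⟩
      have := min_le_right (1 / 2) ((2 * √(π ^ 2 / 6) - a) / (8 * √(π ^ 2 / 6)))
      rw [le_div_iff₀ (by positivity)] at this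
      linarith
    have hlim := tendsto_log_div_sqrt.const_sub ((2 - 4 * δ) * √(π ^ 2 / 6))
    rw [sub_zero] at hlim
    filter_upwards [eventually_lower hδ hδ', hlim.eventually_const_lt hδa] with n h1 h2
    exact h2.trans_le h1
  · filter_upwards [eventually_gt_atTop 0] with k hk
    have hs : 0 < √(k : ℝ) := sqrt_pos.2 (by exact_mod_cast hk)
    exact lt_of_le_of_lt ((div_le_iff₀ hs).2 (log_card_le hk)) hb
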